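/- arXiv:2101.06183 — 2 statements merged into one kernel-verified Lean document; each statement's English description precedes it below -/
import Mathlib

section
/- Let α ∈ (0,1], β > 0, λ > 0 and let γ be a positive integer. Then lim_{s→∞} s^{1/(2α)} · ( λ^{1/α}/α − s^{1−1/α} λ γ E^{γ+1}_{α,α+β}(λs) / E^γ_{α,β}(λs) ) = 0. -/
open Filter Topology

/-- The Prabhakar (three-parameter Mittag-Leffler) function
`E^γ_{α,β}(u) = ∑_{k≥0} u^k (γ)_k / (k! Γ(αk+β))`. -/
noncomputable def prabhakar (α β γ : ℝ) (u : ℝ) : ℝ :=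
  ∑' k : ℕ, u ^ k * Polynomial.eval γ (ascPochhammer ℝ k)
    / ((k.factorial : ℝ) * Real.Gamma (α * (k : ℝ) + β))

/-!
Put `K(b, γ) = x ^ (b - 1) E^γ_{α,b}(x ^ α)` with `x = (λ s) ^ (1 / α)`. The recurrence
`α γ K(α + b, γ + 1) = x K(b - 1, γ) + (1 - b) K(b, γ)` turns the quantity in question into a
multiple of `√x (K(β - 1, γ) / K(β, γ) - 1) + (1 - β) / √x`, so `K(b, γ)` has to be invariant under
`b ↦ b - 1` up to a relative `o(1 / √x)`. The recurrence also passes this invariance from `γ` to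
`γ + 1`, which leaves `γ = 1`.

There `K(b, 1)` is the sum of `x ^ (t - 1) / Γ(t)` over `t = b, b + α, b + 2 α, …`. These terms are
log-concave in `t` with a mode within `1` of `x` and of width about `√x`, so comparing two
interlacing progressions shows that `√x (K(b, 1) / K(1, 1) - 1)` stays bounded. As a function of `b`
it is asymptotically `α`-periodic, and, along unit steps, convex up to `O(1 / √x)`. A bounded convex
function on the whole line is constant, so the unit differences tend to `0`.
-/

open Ring (multichoose)

section Multichoose

attribute [local instance] BinomialRing.toIsAddTorsionFree

lemma mul_multichoose_add_one {R : Type*} [CommRing R] [BinomialRing R] (r : R) (k : ℕ) :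
    r * multichoose (r + 1) k = (k + 1) * multichoose r (k + 1) := by
  rw [← nsmul_right_inj k.factorial_ne_zero]
  calc k.factorial • (r * multichoose (r + 1) k)
      = r * k.factorial • multichoose (r + 1) k := by simp only [nsmul_eq_mul]; ring
    _ = (k + 1).factorial • multichoose r (k + 1) := by
        rw [Ring.factorial_nsmul_multichoose_eq_ascPochhammer,
          Ring.factorial_nsmul_multichoose_eq_ascPochhammer,
          Polynomial.ascPochhammer_smeval_eq_eval, Polynomial.ascPochhammer_smeval_eq_eval,
          ascPochhammer_succ_left]
        simp only [Polynomial.eval_mul, Polynomial.eval_comp, Polynomial.eval_add,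
          Polynomial.eval_X, Polynomial.eval_one]
    _ = k.factorial • ((k + 1) * multichoose r (k + 1)) := by
        simp only [nsmul_eq_mul, Nat.factorial_succ]; push_cast; ring

end Multichoose

lemma multichoose_eq_ascPochhammer_eval_div {K : Type*} [Field K] [CharZero K] [BinomialRing K]
    (r : K) (k : ℕ) :
    multichoose r k = (ascPochhammer K k).eval r / k.factorial := by
  rw [eq_div_iff (Nat.cast_ne_zero.2 k.factorial_ne_zero), mul_comm, ← nsmul_eq_mul,
    Ring.factorial_nsmul_multichoose_eq_ascPochhammer, Polynomial.ascPochhammer_smeval_eq_eval]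

lemma summable_norm_multichoose_mul_pow (r : ℝ) {ρ : ℝ} (hρ : |ρ| < 1) :
    Summable fun k : ℕ => ‖multichoose r k * ρ ^ k‖ := by
  have hlt : (‖ρ‖₊ : ENNReal) < 1 := by exact_mod_cast hρ
  simpa [FormalMultilinearSeries.ofScalars_norm, Ring.choose, add_sub_right_comm] using
    FormalMultilinearSeries.summable_norm_mul_pow _
      (hlt.trans_le (Real.one_div_one_sub_rpow_hasFPowerSeriesOnBall_zero r).r_le)

lemma exists_monotoneOn_antitoneOn_of_concaveOn {f : ℝ → ℝ} {l a b : ℝ}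
    (hf : ConcaveOn ℝ (Set.Ioi l) f) (hla : l < a) (hab : a < b) (hfab : f a = f b) :
    ∃ m ∈ Set.Icc a b, MonotoneOn f (Set.Ioc l m) ∧ AntitoneOn f (Set.Ici m) := by
  obtain ⟨m, hm, hmax⟩ := isCompact_Icc.exists_isMaxOn (Set.nonempty_Icc.2 hab.le)
    ((hf.continuousOn isOpen_Ioi).mono fun t ht => hla.trans_le ht.1)
  have hlm : l < m := hla.trans_le hm.1
  have hglobal : ∀ t, l < t → f t ≤ f m := by
    intro t ht
    rcases le_total t a with hta | hat
    · exact (hf.left_le_of_le_right'' ht (hla.trans hab) hta hab hfab.le).trans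
        (hmax (Set.left_mem_Icc.2 hab.le))
    · rcases le_total t b with htb | hbt
      · exact hmax ⟨hat, htb⟩
      · exact (hf.right_le_of_le_left'' hla ht hab hbt hfab.ge).trans
          (hmax (Set.right_mem_Icc.2 hab.le))
  refine ⟨m, hm, fun s hs t ht hst => ?_, fun s hs t _ hst => ?_⟩
  · exact (min_eq_left (hglobal s hs.1)).ge.trans (hf.min_le_of_mem_Icc hs.1 hlm ⟨hst, ht.2⟩)
  · have hlt : l < t := hlm.trans_le (hs.trans hst)
    exact (min_eq_right (hglobal t hlt)).ge.trans (hf.min_le_of_mem_Icc hlm hlt ⟨hs, hst⟩)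

lemma sum_range_sub_mem_Icc_of_interlacing {ι : Type*} [Preorder ι] {f : ι → ℝ} {s : Set ι}
    (hf : MonotoneOn f s) {p q : ℕ → ι} (hp : ∀ k, p k ∈ s) (hq : ∀ k, q k ∈ s)
    (hpq : ∀ k, p k ≤ q k) (hqp : ∀ k, q k ≤ p (k + 1)) (n : ℕ) :
    ∑ k ∈ Finset.range n, (f (q k) - f (p k)) ∈ Set.Icc 0 (f (p n) - f (p 0)) := by
  refine ⟨Finset.sum_nonneg fun k _ => sub_nonneg.2 (hf (hp k) (hq k) (hpq k)), ?_⟩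
  rw [← Finset.sum_range_sub fun k => f (p k)]
  gcongr with k
  exact hf (hq k) (hp _) (hqp k)

-- Split `g` at its mode as a difference of two monotone functions with values in `[0, g m]`: each
-- contributes a telescoping sum in `[0, g m]`.
lemma abs_tsum_sub_tsum_le_of_interlacing {g : ℝ → ℝ} {l m : ℝ} (hg : ∀ t, l < t → 0 ≤ g t)
    (hlm : l < m) (hmono : MonotoneOn g (Set.Ioc l m)) (hanti : AntitoneOn g (Set.Ici m))
    {p q : ℕ → ℝ} (hlp : ∀ k, l < p k) (hpq : ∀ k, p k ≤ q k) (hqp : ∀ k, q k ≤ p (k + 1))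
    (hsp : Summable fun k => g (p k)) (hsq : Summable fun k => g (q k)) :
    |∑' k, g (q k) - ∑' k, g (p k)| ≤ g m := by
  set rise : ℝ → ℝ := fun t => g (min t m) with hrise
  set fall : ℝ → ℝ := fun t => g m - g (max t m) with hfall
  have rise_mono : MonotoneOn rise (Set.Ioi l) := fun s hs t ht hst =>
    hmono ⟨lt_min hs hlm, min_le_right _ _⟩ ⟨lt_min ht hlm, min_le_right _ _⟩
      (min_le_min_right m hst)
  have fall_mono : MonotoneOn fall (Set.Ioi l) := fun s _ t _ hst =>
    sub_le_sub_left (hanti (Set.mem_Ici.2 (le_max_right s m)) (Set.mem_Ici.2 (le_max_right t m))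
      (max_le_max_right m hst)) _
  have rise_mem : ∀ t, l < t → rise t ∈ Set.Icc 0 (g m) := fun t ht =>
    ⟨hg _ (lt_min ht hlm), hmono ⟨lt_min ht hlm, min_le_right _ _⟩ ⟨hlm, le_rfl⟩
      (min_le_right _ _)⟩
  have fall_mem : ∀ t, fall t ∈ Set.Icc 0 (g m) := fun t =>
    ⟨sub_nonneg.2 (hanti Set.self_mem_Ici (Set.mem_Ici.2 (le_max_right t m)) (le_max_right t m)),
      sub_le_self _ (hg _ (hlm.trans_le (le_max_right _ _)))⟩
  have split : ∀ t, g t = rise t - fall t := by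
    intro t
    rcases le_total t m with h | h <;> simp [hrise, hfall, h]
  have hlq : ∀ k, l < q k := fun k => (hlp k).trans_le (hpq k)
  have partial_sum : ∀ n, |∑ k ∈ Finset.range n, (g (q k) - g (p k))| ≤ g m := by
    intro n
    obtain ⟨rise_lower, rise_upper⟩ :=
      sum_range_sub_mem_Icc_of_interlacing rise_mono hlp hlq hpq hqp n
    obtain ⟨fall_lower, fall_upper⟩ :=
      sum_range_sub_mem_Icc_of_interlacing fall_mono hlp hlq hpq hqp n
    have hsum : ∑ k ∈ Finset.range n, (g (q k) - g (p k)) =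
        ∑ k ∈ Finset.range n, (rise (q k) - rise (p k))
          - ∑ k ∈ Finset.range n, (fall (q k) - fall (p k)) := by
      rw [← Finset.sum_sub_distrib]
      exact Finset.sum_congr rfl fun k _ => by rw [split (q k), split (p k)]; ring
    rw [hsum]
    exact abs_sub_le_of_nonneg_of_le rise_lower
      (by linarith [(rise_mem _ (hlp n)).2, (rise_mem _ (hlp 0)).1]) fall_lower
      (by linarith [(fall_mem (p n)).2, (fall_mem (p 0)).1])
  rw [← hsq.tsum_sub hsp]
  exact le_of_tendsto' (hsq.sub hsp).hasSum.tendsto_sum_nat.abs partial_sum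

lemma nat_mul_le_tsum_of_antitoneOn {g : ℝ → ℝ} {a b m : ℝ} (ha : 0 < a) (hbm : b ≤ m)
    (hg : ∀ t, b ≤ t → 0 ≤ g t) (hanti : AntitoneOn g (Set.Ici m))
    (hs : Summable fun k : ℕ => g (a * k + b)) (n : ℕ) :
    n * g (m + n * a) ≤ ∑' k : ℕ, g (a * k + b) := by
  have nonneg : ∀ k : ℕ, 0 ≤ g (a * k + b) := fun k =>
    hg _ (le_add_of_nonneg_left (by positivity))
  set K := ⌈(m - b) / a⌉₊
  have le_first : m ≤ a * K + b := by
    linarith [(div_le_iff₀' ha).1 (Nat.le_ceil ((m - b) / a))]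
  have first_lt : a * K + b < m + a := by
    have := Nat.ceil_lt_add_one (div_nonneg (sub_nonneg.2 hbm) ha.le)
    rw [← sub_lt_iff_lt_add, lt_div_iff₀' ha] at this
    linarith
  calc n * g (m + n * a) = ∑ _j ∈ Finset.range n, g (m + n * a) := by simp
    _ ≤ ∑ j ∈ Finset.range n, g (a * (j + K : ℕ) + b) := by
        refine Finset.sum_le_sum fun j hj => ?_
        have hjn : (j + 1 : ℝ) * a ≤ n * a := by
          gcongr
          exact_mod_cast Finset.mem_range.1 hj
        have hj0 : 0 ≤ a * j := by positivity
        refine hanti ?_ ?_ ?_ <;> push_cast [Set.mem_Ici] <;> nlinarith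
    _ ≤ ∑' j : ℕ, g (a * (j + K : ℕ) + b) :=
        ((summable_nat_add_iff K).2 hs).sum_le_tsum _ fun j _ => nonneg _
    _ ≤ ∑' k : ℕ, g (a * k + b) := by
        rw [← hs.sum_add_tsum_nat_add K]
        exact le_add_of_nonneg_left (Finset.sum_nonneg fun k _ => nonneg k)

lemma le_of_bddAbove_of_convex {a : ℕ → ℝ} (hconv : ∀ n, 2 * a (n + 1) ≤ a n + a (n + 2))
    (hbdd : BddAbove (Set.range a)) : a 1 ≤ a 0 := by
  have slope_mono : Monotone fun n => a (n + 1) - a n :=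
    monotone_nat_of_le_succ fun n => by linarith [hconv n]
  have linear_growth : ∀ n : ℕ, n * (a 1 - a 0) ≤ a n - a 0 := by
    intro n
    calc n * (a 1 - a 0) = ∑ _k ∈ Finset.range n, (a 1 - a 0) := by
          rw [Finset.sum_const, Finset.card_range, nsmul_eq_mul]
      _ ≤ ∑ k ∈ Finset.range n, (a (k + 1) - a k) :=
          Finset.sum_le_sum fun k _ => slope_mono k.zero_le
      _ = a n - a 0 := Finset.sum_range_sub a n
  obtain ⟨C, hC⟩ := hbdd
  by_contra! h
  obtain ⟨n, hn⟩ := exists_nat_gt ((C - a 0) / (a 1 - a 0))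
  rw [div_lt_iff₀ (sub_pos.2 h)] at hn
  linarith [linear_growth n, hC ⟨n, rfl⟩]

lemma eq_of_bounded_of_convex {a : ℝ → ℝ} {C : ℝ} (hbdd : ∀ b, |a b| ≤ C)
    (hconv : ∀ b, 2 * a (b + 1) ≤ a b + a (b + 2)) (b : ℝ) : a (b + 1) = a b := by
  apply le_antisymm
  · have := le_of_bddAbove_of_convex (a := fun n => a (b + n))
      (fun n => by convert hconv (b + n) using 3 <;> push_cast <;> ring)
      ⟨C, by rintro _ ⟨n, rfl⟩; exact (abs_le.1 (hbdd _)).2⟩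
    simpa using this
  · have := le_of_bddAbove_of_convex (a := fun n => a (b + 1 - n))
      (fun n => by
        have := hconv (b + 1 - (n + 2))
        push_cast
        ring_nf at this ⊢
        linarith)
      ⟨C, by rintro _ ⟨n, rfl⟩; exact (abs_le.1 (hbdd _)).2⟩
    simpa using this

section PeriodicModuloNegligible

variable {ι : Type*} {l : Filter ι} {ψ : ℝ → ι → ℝ} {a C : ℝ}

lemma tendsto_sub_add_int_mul (hper : ∀ b, Tendsto (fun x => ψ b x - ψ (b + a) x) l (𝓝 0))
    (n : ℤ) (b : ℝ) : Tendsto (fun x => ψ b x - ψ (b + n * a) x) l (𝓝 0) := by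
  induction n with
  | zero => simpa using tendsto_const_nhds
  | succ n ih =>
    convert ih.add (hper (b + n * a)) using 2
    · push_cast; ring_nf
    · simp
  | pred n ih =>
    convert ih.sub (hper (b + (-n - 1) * a)) using 2
    · push_cast; ring_nf
    · simp

-- Along any ultrafilter the `ψ b` have limits `f b`; these form a bounded convex function of `b`,
-- which is constant along unit steps.
lemma tendsto_add_one_sub_of_bounded_of_convex {e : ℝ → ι → ℝ} (ha : 0 < a)
    (hper : ∀ b, Tendsto (fun x => ψ b x - ψ (b + a) x) l (𝓝 0)) (c : ℝ)
    (hbdd : ∀ b ∈ Set.Icc c (c + a), ∀ᶠ x in l, |ψ b x| ≤ C)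
    (he : ∀ b, c ≤ b → Tendsto (e b) l (𝓝 0))
    (hconv : ∀ b, c ≤ b → ∀ᶠ x in l, 2 * ψ (b + 1) x ≤ ψ b x + ψ (b + 2) x + e b x) (b : ℝ) :
    Tendsto (fun x => ψ (b + 1) x - ψ b x) l (𝓝 0) := by
  rw [tendsto_iff_ultrafilter]
  intro 𝒰 h𝒰
  have limit_exists : ∀ b, ∃ y, |y| ≤ C ∧ Tendsto (ψ b) 𝒰 (𝓝 y) := by
    intro b
    obtain ⟨n, hn, -⟩ := existsUnique_add_zsmul_mem_Ico ha b c
    rw [zsmul_eq_mul] at hn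
    obtain ⟨y, hy, hlim⟩ := (isCompact_Icc (a := -C) (b := C)).ultrafilter_le_nhds'
      (𝒰.map (ψ (b + n * a)))
      ((hbdd _ (Set.Ico_subset_Icc_self hn)).filter_mono h𝒰 |>.mono fun x => abs_le.1)
    refine ⟨y, abs_le.2 hy, ?_⟩
    simpa using ((tendsto_sub_add_int_mul hper n b).mono_left h𝒰).add hlim
  choose f hfC hf using limit_exists
  have periodic : ∀ (n : ℕ) b, f b = f (b + n * a) := fun n b =>
    sub_eq_zero.1 <| tendsto_nhds_unique ((hf b).sub (hf (b + n * a)))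
      (by simpa using (tendsto_sub_add_int_mul hper n b).mono_left h𝒰)
  have convex : ∀ b, 2 * f (b + 1) ≤ f b + f (b + 2) := by
    intro b
    obtain ⟨n, hn⟩ := exists_nat_ge ((c - b) / a)
    rw [div_le_iff₀ ha, sub_le_iff_le_add'] at hn
    rw [periodic n b, periodic n (b + 1), periodic n (b + 2), add_right_comm b 1,
      add_right_comm b 2]
    have := (((hf (b + n * a)).add (hf (b + n * a + 2))).add ((he _ hn).mono_left h𝒰))
    rw [add_zero] at this
    exact le_of_tendsto_of_tendsto ((hf (b + n * a + 1)).const_mul 2) this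
      ((hconv _ hn).filter_mono h𝒰)
  simpa [eq_of_bounded_of_convex hfC convex b] using (hf (b + 1)).sub (hf b)

lemma eventually_abs_le_add_one (ha : 0 < a)
    (hper : ∀ b, Tendsto (fun x => ψ b x - ψ (b + a) x) l (𝓝 0)) (c : ℝ)
    (hbdd : ∀ b ∈ Set.Icc c (c + a), ∀ᶠ x in l, |ψ b x| ≤ C) (b : ℝ) :
    ∀ᶠ x in l, |ψ b x| ≤ C + 1 := by
  obtain ⟨n, hn, -⟩ := existsUnique_add_zsmul_mem_Ico ha b c
  rw [zsmul_eq_mul] at hn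
  filter_upwards [hbdd _ (Set.Ico_subset_Icc_self hn),
    (tendsto_sub_add_int_mul hper n b).abs.eventually_le_const
      (show |(0 : ℝ)| < 1 by simp)] with x hx hx'
  linarith [abs_sub_abs_le_abs_sub (ψ b x) (ψ (b + n * a) x)]

end PeriodicModuloNegligible

section RiemannLiouville

variable {t x : ℝ}

/-- The Riemann–Liouville kernel of order `t`, the convolution kernel of fractional integration of
order `t`. It is `0` for `t = 0, -1, -2, …`, where Mathlib's `Γ` takes the value `0`, in agreement
with `1 / Γ` being entire. -/
noncomputable def rlKernel (t x : ℝ) : ℝ :=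
  x ^ (t - 1) / Real.Gamma t

lemma rlKernel_pos (ht : 0 < t) (hx : 0 < x) : 0 < rlKernel t x :=
  div_pos (Real.rpow_pos_of_pos hx _) (Real.Gamma_pos_of_pos ht)

lemma mul_rlKernel_add_one (t : ℝ) (hx : 0 < x) :
    t * rlKernel (t + 1) x = x * rlKernel t x := by
  rcases eq_or_ne t 0 with rfl | ht
  · simp [rlKernel]
  · rw [rlKernel, rlKernel, Real.Gamma_add_one ht, add_sub_cancel_right,
      Real.rpow_sub_one hx.ne']
    field_simp

lemma rlKernel_eq_div_mul_rlKernel_add_one (t : ℝ) (hx : 0 < x) :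
    rlKernel t x = t / x * rlKernel (t + 1) x := by
  rw [div_mul_eq_mul_div, mul_rlKernel_add_one t hx, mul_div_cancel_left₀ _ hx.ne']

lemma rlKernel_mul (t : ℝ) {c : ℝ} (hc : 0 ≤ c) (hx : 0 ≤ x) :
    rlKernel t (c * x) = c ^ (t - 1) * rlKernel t x := by
  rw [rlKernel, rlKernel, Real.mul_rpow hc hx, mul_div_assoc]

lemma concaveOn_log_rlKernel (hx : 0 < x) :
    ConcaveOn ℝ (Set.Ioi 0) fun t => Real.log (rlKernel t x) := by
  have hlin : ConcaveOn ℝ (Set.Ioi 0) fun t : ℝ => t * Real.log x :=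
    ⟨convex_Ioi 0, fun s _ t _ a b _ _ _ => by simp only [smul_eq_mul]; linarith⟩
  refine ((hlin.add_const (-Real.log x)).sub Real.convexOn_log_Gamma).congr fun t ht => ?_
  simp only [Pi.sub_apply, Pi.add_apply, Function.comp_apply, rlKernel]
  rw [Real.log_div (Real.rpow_pos_of_pos hx _).ne' (Real.Gamma_pos_of_pos ht).ne',
    Real.log_rpow hx]
  ring

lemma exists_monotoneOn_antitoneOn_rlKernel (hx : 0 < x) :
    ∃ m ∈ Set.Icc x (x + 1), MonotoneOn (rlKernel · x) (Set.Ioc 0 m) ∧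
      AntitoneOn (rlKernel · x) (Set.Ici m) := by
  have heq : rlKernel x x = rlKernel (x + 1) x := by
    rw [rlKernel_eq_div_mul_rlKernel_add_one x hx, div_self hx.ne', one_mul]
  obtain ⟨m, hm, hmono, hanti⟩ := exists_monotoneOn_antitoneOn_of_concaveOn
    (concaveOn_log_rlKernel hx) hx (lt_add_one x) (congrArg Real.log heq)
  have hm0 : 0 < m := hx.trans_le hm.1
  refine ⟨m, hm, fun s hs t ht hst => ?_, fun s hs t ht hst => ?_⟩
  · exact (Real.log_le_log_iff (rlKernel_pos hs.1 hx) (rlKernel_pos ht.1 hx)).1 (hmono hs ht hst)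
  · exact (Real.log_le_log_iff (rlKernel_pos (hm0.trans_le ht) hx)
      (rlKernel_pos (hm0.trans_le hs) hx)).1 (hanti hs ht hst)

lemma exists_forall_rlKernel_le (hx : 0 < x) : ∃ M, ∀ t, 0 < t → rlKernel t x ≤ M := by
  obtain ⟨m, hm, hmono, hanti⟩ := exists_monotoneOn_antitoneOn_rlKernel hx
  have hm0 : 0 < m := hx.trans_le hm.1
  refine ⟨rlKernel m x, fun t ht => ?_⟩
  rcases le_total t m with htm | hmt
  · exact hmono ⟨ht, htm⟩ ⟨hm0, le_rfl⟩ htm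
  · exact hanti Set.self_mem_Ici hmt hmt

lemma rlKernel_le_exp_mul (ht : 0 < t) (hx : 0 < x) (n : ℕ) :
    rlKernel t x ≤ Real.exp (n * ((t + n) / x - 1)) * rlKernel (t + n) x := by
  induction n generalizing t with
  | zero => simp
  | succ n ih =>
    have ratio_le : t / x ≤ Real.exp ((t + 1 + n) / x - 1) := by
      have := Real.add_one_le_exp ((t + 1 + n) / x - 1)
      have : t / x ≤ (t + 1 + n) / x := by gcongr; linarith [n.cast_nonneg (α := ℝ)]
      linarith
    calc rlKernel t x = t / x * rlKernel (t + 1) x := rlKernel_eq_div_mul_rlKernel_add_one t hx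
      _ ≤ Real.exp ((t + 1 + n) / x - 1) *
          (Real.exp (n * ((t + 1 + n) / x - 1)) * rlKernel (t + 1 + n) x) :=
        mul_le_mul ratio_le (ih (by linarith)) (rlKernel_pos (by linarith) hx).le
          (Real.exp_pos _).le
      _ = Real.exp ((n + 1 : ℕ) * ((t + (n + 1 : ℕ)) / x - 1)) *
          rlKernel (t + (n + 1 : ℕ)) x := by
        rw [← mul_assoc, ← Real.exp_add]
        push_cast
        ring_nf

lemma rlKernel_le_exp_one_mul {m y : ℝ} (hy : 0 ≤ y) (hyx : y + 2 ≤ √x)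
    (hm : m ∈ Set.Icc x (x + 1)) (hanti : AntitoneOn (rlKernel · x) (Set.Ici m)) :
    rlKernel m x ≤ Real.exp 1 * rlKernel (m + y) x := by
  have hx : 0 < x := Real.sqrt_pos.1 (by linarith)
  have hsq : √x * √x = x := Real.mul_self_sqrt hx.le
  have hm0 : 0 < m := hx.trans_le hm.1
  set J := ⌈y⌉₊
  have le_J : y ≤ J := Nat.le_ceil y
  have J_le : (J : ℝ) + 1 ≤ √x := by linarith [Nat.ceil_lt_add_one hy]
  have exponent_le : J * ((m + J) / x - 1) ≤ 1 := by
    have : (m + J) / x - 1 ≤ (J + 1) / x := by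
      rw [div_sub_one hx.ne']
      gcongr
      linarith [hm.2]
    calc J * ((m + J) / x - 1) ≤ J * ((J + 1) / x) := by gcongr
      _ ≤ 1 := by rw [← mul_div_assoc, div_le_one hx]; nlinarith
  calc rlKernel m x ≤ Real.exp (J * ((m + J) / x - 1)) * rlKernel (m + J) x :=
        rlKernel_le_exp_mul hm0 hx J
    _ ≤ Real.exp 1 * rlKernel (m + y) x :=
      mul_le_mul (Real.exp_le_exp.2 exponent_le)
        (hanti (Set.mem_Ici.2 (by linarith)) (Set.mem_Ici.2 (by linarith)) (by linarith))
        (rlKernel_pos (by positivity) hx).le (Real.exp_pos 1).le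

lemma two_mul_rlKernel_add_one_le (ht : 0 < t) (hx : 0 < x) :
    2 * rlKernel (t + 1) x ≤
      rlKernel t x + rlKernel (t + 2) x + 2 / x * rlKernel (t + 2) x := by
  have h₁ : rlKernel (t + 1) x = (t + 1) / x * rlKernel (t + 2) x := by
    rw [rlKernel_eq_div_mul_rlKernel_add_one _ hx, add_assoc, one_add_one_eq_two]
  have h₀ : rlKernel t x = t / x * ((t + 1) / x * rlKernel (t + 2) x) := by
    rw [rlKernel_eq_div_mul_rlKernel_add_one _ hx, h₁]
  have excess : rlKernel t x + rlKernel (t + 2) x + 2 / x * rlKernel (t + 2) x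
      - 2 * rlKernel (t + 1) x = ((t - x) ^ 2 + t) / x ^ 2 * rlKernel (t + 2) x := by
    rw [h₀, h₁]
    field_simp
    ring
  have : 0 ≤ ((t - x) ^ 2 + t) / x ^ 2 * rlKernel (t + 2) x :=
    mul_nonneg (by positivity) (rlKernel_pos (by linarith) hx).le
  linarith

lemma summable_multichoose_mul_rlKernel {α : ℝ} (hα : 0 < α) (γ b : ℝ) (hx : 0 < x) :
    Summable fun k : ℕ => multichoose γ k * rlKernel (α * k + b) x := by
  obtain ⟨M, hM⟩ := exists_forall_rlKernel_le (mul_pos two_pos hx)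
  have hρ : |(1 / 2 : ℝ) ^ α| < 1 := by
    rw [abs_of_pos (by positivity)]
    exact Real.rpow_lt_one (by norm_num) (by norm_num) hα
  have halve : ∀ t, rlKernel t x = (1 / 2) ^ (t - 1) * rlKernel t (2 * x) := fun t => by
    rw [← rlKernel_mul t (by norm_num) (by positivity), ← mul_assoc]
    norm_num
  refine ((summable_norm_multichoose_mul_pow γ hρ).mul_right
    ((1 / 2) ^ (b - 1) * M)).of_norm_bounded_eventually_nat ?_
  have large : ∀ᶠ k : ℕ in atTop, 0 < α * k + b :=
    (tendsto_atTop_add_const_right _ b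
      (tendsto_natCast_atTop_atTop.const_mul_atTop hα)).eventually_gt_atTop 0
  filter_upwards [large] with k hk
  calc ‖multichoose γ k * rlKernel (α * k + b) x‖
      = ‖multichoose γ k‖ * ((1 / 2) ^ (α * k + b - 1) * rlKernel (α * k + b) (2 * x)) := by
        rw [norm_mul, Real.norm_of_nonneg (rlKernel_pos hk hx).le, halve]
    _ ≤ ‖multichoose γ k‖ * ((1 / 2) ^ (α * k + b - 1) * M) := by gcongr; exact hM _ hk
    _ = ‖multichoose γ k * ((1 / 2) ^ α) ^ k‖ * ((1 / 2) ^ (b - 1) * M) := by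
        rw [norm_mul, Real.norm_of_nonneg (by positivity : (0 : ℝ) ≤ ((1 / 2) ^ α) ^ k),
          add_sub_assoc, Real.rpow_add (by norm_num), Real.rpow_mul_natCast (by norm_num)]
        ring

lemma tendsto_sqrt_mul_rlKernel_div_rlKernel {s t : ℝ} (hst : s + 1 / 2 < t) :
    Tendsto (fun x => √x * (rlKernel s x / rlKernel t x)) atTop (𝓝 0) := by
  have := (tendsto_rpow_neg_atTop (sub_pos.2 hst)).const_mul (Real.Gamma t / Real.Gamma s)
  rw [mul_zero] at this
  refine this.congr' ?_
  filter_upwards [eventually_gt_atTop 0] with x hx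
  rw [show -(t - (s + 1 / 2)) = 1 / 2 + (s - 1) - (t - 1) by ring, Real.rpow_sub hx,
    Real.rpow_add hx, ← Real.sqrt_eq_rpow, rlKernel, rlKernel, div_div_div_eq]
  ring

end RiemannLiouville

section PrabhakarKernel

variable {α x : ℝ}

/-- The Prabhakar kernel `x ^ (β - 1) E^γ_{α,β}(x ^ α)`, through which the argument `λ s` of the
Prabhakar functions enters as `x = (λ s) ^ (1 / α)`. -/
noncomputable def prabhakarKernel (α β γ x : ℝ) : ℝ :=
  x ^ (β - 1) * prabhakar α β γ (x ^ α)

lemma prabhakarKernel_eq_tsum (α β γ : ℝ) (hx : 0 < x) :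
    prabhakarKernel α β γ x = ∑' k : ℕ, multichoose γ k * rlKernel (α * k + β) x := by
  rw [prabhakarKernel, prabhakar, ← tsum_mul_left]
  refine tsum_congr fun k => ?_
  rw [multichoose_eq_ascPochhammer_eval_div, rlKernel, add_sub_assoc, Real.rpow_add hx,
    Real.rpow_mul_natCast hx.le]
  field_simp

lemma mul_prabhakarKernel_add_one (hα : 0 < α) (β γ : ℝ) (hx : 0 < x) :
    α * γ * prabhakarKernel α (α + β) (γ + 1) x =
      x * prabhakarKernel α (β - 1) γ x + (1 - β) * prabhakarKernel α β γ x := by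
  have weighted_term : ∀ k : ℕ, α * k * (multichoose γ k * rlKernel (α * k + β) x) =
      x * (multichoose γ k * rlKernel (α * k + (β - 1)) x)
        + (1 - β) * (multichoose γ k * rlKernel (α * k + β) x) := fun k => by
    have := mul_rlKernel_add_one (α * k + (β - 1)) hx
    rw [show α * k + (β - 1) + 1 = α * k + β by ring] at this
    linear_combination multichoose γ k * this
  have shifted_term : ∀ k : ℕ,
      α * γ * (multichoose (γ + 1) k * rlKernel (α * k + (α + β)) x) =
        α * (k + 1 : ℕ) * (multichoose γ (k + 1) * rlKernel (α * (k + 1 : ℕ) + β) x) := fun k => by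
    rw [show α * k + (α + β) = α * (k + 1 : ℕ) + β by push_cast; ring]
    push_cast
    linear_combination
      α * rlKernel (α * (k + 1) + β) x * mul_multichoose_add_one γ k
  have h₁ := (summable_multichoose_mul_rlKernel hα γ (β - 1) hx).mul_left x
  have h₂ := (summable_multichoose_mul_rlKernel hα γ β hx).mul_left (1 - β)
  simp only [prabhakarKernel_eq_tsum _ _ _ hx, ← tsum_mul_left, shifted_term]
  rw [← h₁.tsum_add h₂, ← tsum_congr weighted_term,
    ((h₁.add h₂).congr fun k => (weighted_term k).symm).tsum_eq_zero_add]
  simp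

lemma summable_rlKernel (hα : 0 < α) (b : ℝ) (hx : 0 < x) :
    Summable fun k : ℕ => rlKernel (α * k + b) x := by
  simpa using summable_multichoose_mul_rlKernel hα 1 b hx

lemma prabhakarKernel_one_eq_tsum (α b : ℝ) (hx : 0 < x) :
    prabhakarKernel α b 1 x = ∑' k : ℕ, rlKernel (α * k + b) x := by
  simp [prabhakarKernel_eq_tsum _ _ _ hx]

lemma prabhakarKernel_one_eq_add (hα : 0 < α) (b : ℝ) (hx : 0 < x) :
    prabhakarKernel α b 1 x = rlKernel b x + prabhakarKernel α (b + α) 1 x := by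
  rw [prabhakarKernel_one_eq_tsum _ _ hx, (summable_rlKernel hα b hx).tsum_eq_zero_add,
    prabhakarKernel_one_eq_tsum _ _ hx]
  congr 1
  · simp
  · exact tsum_congr fun k => by push_cast; ring_nf

lemma rlKernel_le_prabhakarKernel_one (hα : 0 < α) {b : ℝ} (hb : 0 < b) (hx : 0 < x) (k : ℕ) :
    rlKernel (α * k + b) x ≤ prabhakarKernel α b 1 x := by
  rw [prabhakarKernel_one_eq_tsum _ _ hx]
  exact (summable_rlKernel hα b hx).le_tsum k fun j _ => (rlKernel_pos (by positivity) hx).le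

lemma prabhakarKernel_one_pos (hα : 0 < α) {b : ℝ} (hb : 0 < b) (hx : 0 < x) :
    0 < prabhakarKernel α b 1 x :=
  (rlKernel_pos (by positivity) hx).trans_le (rlKernel_le_prabhakarKernel_one hα hb hx 0)

lemma two_mul_prabhakarKernel_one_add_one_le (hα : 0 < α) {b : ℝ} (hb : 0 < b) (hx : 0 < x) :
    2 * prabhakarKernel α (b + 1) 1 x ≤ prabhakarKernel α b 1 x + prabhakarKernel α (b + 2) 1 x
      + 2 / x * prabhakarKernel α (b + 2) 1 x := by
  have hs := fun b => summable_rlKernel hα b hx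
  simp only [prabhakarKernel_one_eq_tsum _ _ hx, ← tsum_mul_left]
  rw [← (hs b).tsum_add (hs _), ← ((hs b).add (hs _)).tsum_add ((hs _).mul_left _)]
  refine ((hs _).mul_left _).tsum_le_tsum (fun k => ?_)
    (((hs b).add (hs _)).add ((hs _).mul_left _))
  simpa only [add_assoc] using
    two_mul_rlKernel_add_one_le (show 0 < α * k + b by positivity) hx

lemma abs_prabhakarKernel_one_sub_le (hα : 0 < α) {b c m : ℝ} (hc : 0 < c)
    (hb : b ∈ Set.Icc c (c + α)) (hx : 0 < x) (hm : 0 < m)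
    (hmono : MonotoneOn (rlKernel · x) (Set.Ioc 0 m))
    (hanti : AntitoneOn (rlKernel · x) (Set.Ici m)) :
    |prabhakarKernel α b 1 x - prabhakarKernel α c 1 x| ≤ rlKernel m x := by
  simp only [prabhakarKernel_one_eq_tsum _ _ hx]
  exact abs_tsum_sub_tsum_le_of_interlacing (fun t ht => (rlKernel_pos ht hx).le) hm hmono hanti
    (fun k => by positivity) (fun k => by linarith [hb.1])
    (fun k => by push_cast; linarith [hb.2]) (summable_rlKernel hα c hx) (summable_rlKernel hα b hx)

-- About `√x / α` of the orders `α k + 1` lie within `√x` of the mode, and there `rlKernel` is still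
-- comparable to its maximum.
lemma sqrt_mul_rlKernel_le (hα : 0 < α) (hx : 4 + 2 * α ≤ √x) {m : ℝ}
    (hm : m ∈ Set.Icc x (x + 1)) (hanti : AntitoneOn (rlKernel · x) (Set.Ici m)) :
    √x * rlKernel m x ≤ 2 * α * Real.exp 1 * prabhakarKernel α 1 1 x := by
  have hx0 : 0 < x := Real.sqrt_pos.1 (by linarith)
  have hx1 : 1 ≤ x := Real.one_le_sqrt.1 (by linarith)
  have hm0 : 0 < m := hx0.trans_le hm.1
  set n := ⌊(√x - 2) / α⌋₊
  have n_upper : n * α ≤ √x - 2 :=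
    (le_div_iff₀ hα).1 (Nat.floor_le (div_nonneg (by linarith) hα.le))
  have n_lower : √x ≤ 2 * α * n := by
    have := Nat.lt_floor_add_one ((√x - 2) / α)
    rw [div_lt_iff₀ hα] at this
    linarith
  have near_mode : rlKernel m x ≤ Real.exp 1 * rlKernel (m + n * α) x :=
    rlKernel_le_exp_one_mul (by positivity) (by linarith) hm hanti
  have block_sum : n * rlKernel (m + n * α) x ≤ prabhakarKernel α 1 1 x := by
    rw [prabhakarKernel_one_eq_tsum _ _ hx0]
    exact nat_mul_le_tsum_of_antitoneOn hα (hx1.trans hm.1)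
      (fun t ht => (rlKernel_pos (by linarith) hx0).le) hanti (summable_rlKernel hα 1 hx0) n
  calc √x * rlKernel m x
      ≤ 2 * α * n * (Real.exp 1 * rlKernel (m + n * α) x) :=
        mul_le_mul n_lower near_mode (rlKernel_pos hm0 hx0).le (by positivity)
    _ = 2 * α * Real.exp 1 * (n * rlKernel (m + n * α) x) := by ring
    _ ≤ 2 * α * Real.exp 1 * prabhakarKernel α 1 1 x := by gcongr

end PrabhakarKernel

lemma tendsto_inv_sqrt_atTop : Tendsto (fun x : ℝ => (√x)⁻¹) atTop (𝓝 0) :=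
  Real.tendsto_sqrt_atTop.inv_tendsto_atTop

/-- A family `U b` of functions, eventually positive, is asymptotically shift invariant if lowering
the parameter `b` by one changes `U b` by a relative `o(1 / √x)` as `x → ∞`. -/
def IsAsympShiftInvariant (U : ℝ → ℝ → ℝ) : Prop :=
  ∀ b, (∀ᶠ x in atTop, 0 < U b x) ∧
    Tendsto (fun x => √x * (U (b - 1) x / U b x - 1)) atTop (𝓝 0)

namespace IsAsympShiftInvariant

variable {U V : ℝ → ℝ → ℝ} {a c d : ℝ}

lemma tendsto_div (hU : IsAsympShiftInvariant U) (b : ℝ) :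
    Tendsto (fun x => U (b - 1) x / U b x) atTop (𝓝 1) := by
  have := (tendsto_inv_sqrt_atTop.mul (hU b).2).add_const 1
  rw [zero_mul, zero_add] at this
  refine this.congr' ?_
  filter_upwards [eventually_gt_atTop 0] with x hx
  rw [inv_mul_cancel_left₀ (Real.sqrt_pos.2 hx).ne', sub_add_cancel]

lemma tendsto_div_add_div (hU : IsAsympShiftInvariant U) (b d : ℝ) :
    Tendsto (fun x => U (b - 1) x / U b x + (d - b) / x) atTop (𝓝 1) := by
  simpa using (hU.tendsto_div b).add (tendsto_id.const_div_atTop (d - b))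

lemma eventually_pos_of_recurrence (hU : IsAsympShiftInvariant U) (hc : 0 < c)
    (hV : ∀ b x, 0 < x → c * V b x = x * U (b - 1) x + (d - b) * U b x) (b : ℝ) :
    ∀ᶠ x in atTop, 0 < V b x := by
  filter_upwards [(hU.tendsto_div_add_div b d).eventually_const_lt one_pos, (hU b).1,
    eventually_gt_atTop 0] with x hfactor hUb hx
  refine pos_of_mul_pos_right ?_ hc.le
  calc 0 < x * U b x * (U (b - 1) x / U b x + (d - b) / x) := by positivity
    _ = c * V b x := by rw [hV b x hx]; field_simp

lemma tendsto_of_recurrence (hU : IsAsympShiftInvariant U) (hc : 0 < c)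
    (hV : ∀ b x, 0 < x → c * V b x = x * U (b - 1) x + (d - b) * U b x) (b : ℝ) :
    Tendsto (fun x => √x * (V (b - 1) x / V b x - 1)) atTop (𝓝 0) := by
  have limit := (((hU.tendsto_div b).mul (hU (b - 1)).2).add
    ((((hU.tendsto_div b).mul_const (d - b + 1)).sub_const (d - b)).mul
      tendsto_inv_sqrt_atTop)).div (hU.tendsto_div_add_div b d) one_ne_zero
  rw [mul_zero, mul_zero, add_zero, zero_div] at limit
  refine limit.congr' ?_
  filter_upwards [(hU.tendsto_div_add_div b d).eventually_const_lt one_pos, (hU b).1,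
    (hU (b - 1)).1, eventually_gt_atTop 0] with x hfactor hUb hUb' hx
  have hVb : c * V b x = x * U b x * (U (b - 1) x / U b x + (d - b) / x) := by
    rw [hV b x hx]; field_simp
  rw [Pi.div_apply, ← mul_div_mul_left (V (b - 1) x) _ hc.ne', hV (b - 1) x hx, hVb,
    div_eq_iff hfactor.ne', mul_assoc, sub_one_mul, ← div_div, div_mul_cancel₀ _ hfactor.ne',
    ← Real.sqrt_div_self]
  field_simp
  ring

lemma of_recurrence (hU : IsAsympShiftInvariant U) (hc : 0 < c)
    (hV : ∀ b x, 0 < x → c * V (a + b) x = x * U (b - 1) x + (d - b) * U b x) :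
    IsAsympShiftInvariant V := by
  intro b
  have hpos := hU.eventually_pos_of_recurrence (V := fun b => V (a + b)) hc hV (b - a)
  have hlim := hU.tendsto_of_recurrence (V := fun b => V (a + b)) hc hV (b - a)
  simp only [add_sub_cancel, ← add_sub_assoc] at hpos hlim
  exact ⟨hpos, hlim⟩

end IsAsympShiftInvariant

section ScaledDeviation

variable {α : ℝ}

lemma tendsto_sqrt_mul_rlKernel_div_prabhakarKernel_one (hα : 0 < α) (b : ℝ) :
    Tendsto (fun x => √x * (rlKernel b x / prabhakarKernel α 1 1 x)) atTop (𝓝 0) := by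
  obtain ⟨k, hk⟩ := exists_nat_gt ((b - 1 / 2) / α)
  rw [div_lt_iff₀' hα] at hk
  have hlim :=
    (tendsto_sqrt_mul_rlKernel_div_rlKernel (show b + 1 / 2 < α * k + 1 by linarith)).norm
  rw [norm_zero] at hlim
  refine squeeze_zero_norm' ?_ hlim
  filter_upwards [eventually_gt_atTop 0] with x hx
  have hle := rlKernel_le_prabhakarKernel_one hα one_pos hx k
  have hpos : 0 < rlKernel (α * k + 1) x := rlKernel_pos (by positivity) hx
  simp only [norm_mul, norm_div, Real.norm_of_nonneg hpos.le,
    Real.norm_of_nonneg (hpos.le.trans hle)]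
  gcongr

/-- The relative deviation of `x ^ (b - 1) E_{α,b}(x ^ α)` from its value at `b = 1`, magnified by
the width `√x` of the range of orders that dominate the series. -/
noncomputable def scaledDeviation (α b x : ℝ) : ℝ :=
  √x * (prabhakarKernel α b 1 x / prabhakarKernel α 1 1 x - 1)

lemma tendsto_scaledDeviation_sub_add (hα : 0 < α) (b : ℝ) :
    Tendsto (fun x => scaledDeviation α b x - scaledDeviation α (b + α) x) atTop (𝓝 0) := by
  refine (tendsto_sqrt_mul_rlKernel_div_prabhakarKernel_one hα b).congr' ?_
  filter_upwards [eventually_gt_atTop 0] with x hx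
  rw [scaledDeviation, scaledDeviation, prabhakarKernel_one_eq_add hα b hx]
  ring

lemma eventually_abs_scaledDeviation_le (hα : 0 < α) {b : ℝ} (hb : b ∈ Set.Icc 1 (1 + α)) :
    ∀ᶠ x in atTop, |scaledDeviation α b x| ≤ 2 * α * Real.exp 1 := by
  filter_upwards [Real.tendsto_sqrt_atTop.eventually_ge_atTop (4 + 2 * α),
    eventually_gt_atTop 0] with x hlarge hx
  obtain ⟨m, hm, hmono, hanti⟩ := exists_monotoneOn_antitoneOn_rlKernel hx
  have hF : 0 < prabhakarKernel α 1 1 x := prabhakarKernel_one_pos hα one_pos hx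
  calc |scaledDeviation α b x|
      = √x * |prabhakarKernel α b 1 x - prabhakarKernel α 1 1 x| / prabhakarKernel α 1 1 x := by
        rw [scaledDeviation, div_sub_one hF.ne', abs_mul, abs_div, abs_of_pos hF,
          abs_of_nonneg (Real.sqrt_nonneg x), mul_div_assoc]
    _ ≤ √x * rlKernel m x / prabhakarKernel α 1 1 x := by
        gcongr
        exact abs_prabhakarKernel_one_sub_le hα one_pos hb hx (hx.trans_le hm.1) hmono hanti
    _ ≤ 2 * α * Real.exp 1 := by
        rw [div_le_iff₀ hF]
        exact sqrt_mul_rlKernel_le hα hlarge hm hanti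

lemma tendsto_prabhakarKernel_one_div (hα : 0 < α) (b : ℝ) :
    Tendsto (fun x => prabhakarKernel α b 1 x / prabhakarKernel α 1 1 x) atTop (𝓝 1) := by
  have hbdd : IsBoundedUnder (· ≤ ·) atTop (norm ∘ scaledDeviation α b) :=
    ⟨_, eventually_map.2 (eventually_abs_le_add_one hα (tendsto_scaledDeviation_sub_add hα) 1
      (fun _ => eventually_abs_scaledDeviation_le hα) b)⟩
  have := (tendsto_inv_sqrt_atTop.zero_mul_isBoundedUnder_le hbdd).add_const 1
  rw [zero_add] at this
  refine this.congr' ?_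
  filter_upwards [eventually_gt_atTop 0] with x hx
  rw [scaledDeviation, inv_mul_cancel_left₀ (Real.sqrt_pos.2 hx).ne', sub_add_cancel]

lemma two_mul_scaledDeviation_add_one_le (hα : 0 < α) {b x : ℝ} (hb : 0 < b) (hx : 0 < x) :
    2 * scaledDeviation α (b + 1) x ≤ scaledDeviation α b x + scaledDeviation α (b + 2) x
      + 2 * (√x)⁻¹ * (prabhakarKernel α (b + 2) 1 x / prabhakarKernel α 1 1 x) := by
  have hF : 0 < prabhakarKernel α 1 1 x := prabhakarKernel_one_pos hα one_pos hx
  have := mul_le_mul_of_nonneg_left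
    ((div_le_div_iff_of_pos_right hF).2 (two_mul_prabhakarKernel_one_add_one_le hα hb hx))
    (Real.sqrt_nonneg x)
  simp only [scaledDeviation]
  rw [← Real.sqrt_div_self]
  linear_combination this

lemma tendsto_scaledDeviation_add_one_sub (hα : 0 < α) (b : ℝ) :
    Tendsto (fun x => scaledDeviation α (b + 1) x - scaledDeviation α b x) atTop (𝓝 0) := by
  refine tendsto_add_one_sub_of_bounded_of_convex (c := 1) hα (tendsto_scaledDeviation_sub_add hα)
    (fun _ => eventually_abs_scaledDeviation_le hα)
    (e := fun b x => 2 * (√x)⁻¹ * (prabhakarKernel α (b + 2) 1 x / prabhakarKernel α 1 1 x))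
    (fun b _ => ?_) (fun b hb => ?_) b
  · simpa using
      (tendsto_inv_sqrt_atTop.const_mul 2).mul (tendsto_prabhakarKernel_one_div hα (b + 2))
  · filter_upwards [eventually_gt_atTop 0] with x hx
    exact two_mul_scaledDeviation_add_one_le hα (by linarith) hx

end ScaledDeviation

lemma isAsympShiftInvariant_prabhakarKernel_one {α : ℝ} (hα : 0 < α) :
    IsAsympShiftInvariant fun b => prabhakarKernel α b 1 := by
  intro b
  have hpos : ∀ᶠ x in atTop, 0 < prabhakarKernel α b 1 x := by
    filter_upwards [(tendsto_prabhakarKernel_one_div hα b).eventually_const_lt one_pos,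
      eventually_gt_atTop 0] with x hratio hx
    exact (div_pos_iff_of_pos_right (prabhakarKernel_one_pos hα one_pos hx)).1 hratio
  refine ⟨hpos, ?_⟩
  have := (tendsto_scaledDeviation_add_one_sub hα (b - 1)).neg.div
    (tendsto_prabhakarKernel_one_div hα b) one_ne_zero
  rw [neg_zero, zero_div] at this
  refine this.congr' ?_
  filter_upwards [hpos, eventually_gt_atTop 0] with x hb hx
  have hF : 0 < prabhakarKernel α 1 1 x := prabhakarKernel_one_pos hα one_pos hx
  simp only [Pi.div_apply, scaledDeviation, sub_add_cancel]
  field_simp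
  ring

lemma isAsympShiftInvariant_prabhakarKernel {α : ℝ} (hα : 0 < α) {γ : ℕ} (hγ : 1 ≤ γ) :
    IsAsympShiftInvariant fun b => prabhakarKernel α b γ := by
  induction γ, hγ using Nat.le_induction with
  | base => simpa using isAsympShiftInvariant_prabhakarKernel_one hα
  | succ γ hγ ih =>
    have hγ₀ : (0 : ℝ) < γ := by exact_mod_cast hγ
    rw [Nat.cast_succ]
    exact ih.of_recurrence (mul_pos hα hγ₀) fun b x hx => mul_prabhakarKernel_add_one hα b γ hx

lemma prabhakar_rpow_eq {x : ℝ} (α β γ : ℝ) (hx : 0 < x) :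
    prabhakar α β γ (x ^ α) = x ^ (1 - β) * prabhakarKernel α β γ x := by
  rw [prabhakarKernel, ← mul_assoc, ← Real.rpow_add hx]
  simp

lemma mul_rpow_mul_prabhakar_div_prabhakar {α x : ℝ} (hα : 0 < α) (β γ : ℝ) (hx : 0 < x)
    (hK : prabhakarKernel α β γ x ≠ 0) :
    α * γ * x ^ (α - 1) * (prabhakar α (α + β) (γ + 1) (x ^ α) / prabhakar α β γ (x ^ α)) =
      prabhakarKernel α (β - 1) γ x / prabhakarKernel α β γ x + (1 - β) / x := by
  have hβ : x ^ (1 - β) ≠ 0 := (Real.rpow_pos_of_pos hx _).ne'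
  have hpow : x ^ (α - 1) * x ^ (1 - (α + β)) = x ^ (1 - β) / x := by
    rw [← Real.rpow_add hx, ← Real.rpow_sub_one hx.ne']
    ring_nf
  calc α * γ * x ^ (α - 1) * (prabhakar α (α + β) (γ + 1) (x ^ α) / prabhakar α β γ (x ^ α))
      = x ^ (α - 1) * x ^ (1 - (α + β)) * (α * γ * prabhakarKernel α (α + β) (γ + 1) x) /
          (x ^ (1 - β) * prabhakarKernel α β γ x) := by
        rw [prabhakar_rpow_eq _ _ _ hx, prabhakar_rpow_eq _ _ _ hx]
        ring
    _ = (x * prabhakarKernel α (β - 1) γ x + (1 - β) * prabhakarKernel α β γ x) /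
          (x * prabhakarKernel α β γ x) := by
        rw [hpow, mul_prabhakarKernel_add_one hα β γ hx]
        field_simp
    _ = prabhakarKernel α (β - 1) γ x / prabhakarKernel α β γ x + (1 - β) / x := by field_simp

lemma mul_sub_prabhakar_div_prabhakar {α lam s : ℝ} (hα : 0 < α) (β γ : ℝ) (hlam : 0 < lam)
    (hs : 0 < s) {x : ℝ} (hx : x = (lam * s) ^ (1 / α)) (hK : prabhakarKernel α β γ x ≠ 0) :
    s ^ (1 / (2 * α)) * (lam ^ (1 / α) / α - s ^ (1 - 1 / α) * lam * γ *
        prabhakar α (α + β) (γ + 1) (lam * s) / prabhakar α β γ (lam * s)) =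
      -(lam ^ (1 / (2 * α)) / α) *
        (√x * (prabhakarKernel α (β - 1) γ x / prabhakarKernel α β γ x - 1)
          + (1 - β) * (√x)⁻¹) := by
  have hls : 0 < lam * s := mul_pos hlam hs
  have hx₀ : 0 < x := hx ▸ Real.rpow_pos_of_pos hls _
  have arg_eq : lam * s = x ^ α := by
    rw [hx, ← Real.rpow_mul hls.le, one_div_mul_cancel hα.ne', Real.rpow_one]
  have sqrt_eq : s ^ (1 / (2 * α)) * lam ^ (1 / α) = lam ^ (1 / (2 * α)) * √x := by
    have hexp : 1 / α * (1 / 2) = 1 / (2 * α) := by field_simp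
    have hsum : 1 / (2 * α) + 1 / (2 * α) = 1 / α := by field_simp; norm_num
    rw [Real.sqrt_eq_rpow, hx, ← Real.rpow_mul hls.le, hexp, Real.mul_rpow hlam.le hs.le,
      ← mul_assoc, ← Real.rpow_add hlam, hsum, mul_comm]
  have pow_eq : s ^ (1 - 1 / α) * lam = lam ^ (1 / α) * x ^ (α - 1) := by
    have hexp : 1 / α * (α - 1) = 1 - 1 / α := by field_simp
    rw [hx, ← Real.rpow_mul hls.le, hexp, Real.mul_rpow hlam.le hs.le, ← mul_assoc,
      ← Real.rpow_add hlam, add_sub_cancel, Real.rpow_one, mul_comm]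
  have hratio := mul_rpow_mul_prabhakar_div_prabhakar hα β γ hx₀ hK
  rw [pow_eq, arg_eq, ← Real.sqrt_div_self]
  calc _ = s ^ (1 / (2 * α)) * lam ^ (1 / α) / α * (1 - α * γ * x ^ (α - 1) *
          (prabhakar α (α + β) (γ + 1) (x ^ α) / prabhakar α β γ (x ^ α))) := by
        field_simp
    _ = _ := by
        rw [hratio, sqrt_eq]
        ring

theorem H2_limit_prabhakar_general {α lam : ℝ} {γ : ℕ} (hα : 0 < α) (β : ℝ) (hlam : 0 < lam)
    (hγ : 1 ≤ γ) :
    Tendsto (fun s : ℝ => s ^ (1 / (2 * α)) *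
        (lam ^ (1 / α) / α - s ^ (1 - 1 / α) * lam * (γ : ℝ) *
          prabhakar α (α + β) ((γ : ℝ) + 1) (lam * s) / prabhakar α β (γ : ℝ) (lam * s)))
      atTop (𝓝 0) := by
  have rescale : Tendsto (fun s : ℝ => (lam * s) ^ (1 / α)) atTop atTop :=
    (tendsto_rpow_atTop (one_div_pos.2 hα)).comp (tendsto_id.const_mul_atTop hlam)
  obtain ⟨hpos, hlim⟩ := isAsympShiftInvariant_prabhakarKernel hα hγ β
  have limit := ((hlim.add (tendsto_inv_sqrt_atTop.const_mul (1 - β))).comp rescale).const_mul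
    (-(lam ^ (1 / (2 * α)) / α))
  rw [mul_zero, add_zero, mul_zero] at limit
  refine limit.congr' ?_
  filter_upwards [rescale.eventually hpos, eventually_gt_atTop 0] with s hK hs
  exact (mul_sub_prabhakar_div_prabhakar hα β γ hlam hs rfl hK.ne').symm

/-- Limit (indeed convergence to `0`) of `H2` in Section 4.1 of the paper:
for `α ∈ (0,1]`, `β > 0`, `λ > 0` and a positive integer `γ`,
`s^{1/(2α)} ( λ^{1/α}/α - s^{1-1/α} λ γ E^{γ+1}_{α,α+β}(λs) / E^γ_{α,β}(λs) ) → 0`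
as `s → ∞`. -/
theorem H2_limit_prabhakar
    (α β lam : ℝ) (γ : ℕ)
    (hα : α ∈ Set.Ioc (0 : ℝ) 1) (hβ : 0 < β) (hlam : 0 < lam) (hγ : 1 ≤ γ) :
    Tendsto (fun s : ℝ => s ^ (1 / (2 * α)) *
        (lam ^ (1 / α) / α - s ^ (1 - 1 / α) * lam * (γ : ℝ) *
          prabhakar α (α + β) ((γ : ℝ) + 1) (lam * s) / prabhakar α β (γ : ℝ) (lam * s)))
      atTop (𝓝 0) :=
  H2_limit_prabhakar_general hα.1 β hlam hγ
end

section
/- Let λ > 0, d_0, d_{0,0} > 0, and α, α_0, α̃, α̃_0 ∈ (0,1] with α̃/α > α̃_0/α_0. Define R_1(t) := d_{0,0}/E^1_{α_0,1}(λ t^{α̃_0}) − d_0/E^1_{α,1}(λ t^{α̃}). Then R_1(t) > 0 for all sufficiently large t, lim_{t→∞} R_1(t) = 0, and lim_{t→∞} t^{−α̃/α} log R_1(t) = 0. -/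
open Filter Topology

/-- The classical Mittag-Leffler function `E^1_{α,1}(u) = ∑_{k≥0} u^k / Γ(αk+1)`. -/
noncomputable def mittagLeffler (α : ℝ) (u : ℝ) : ℝ :=
  ∑' k : ℕ, u ^ k / Real.Gamma (α * (k : ℝ) + 1)

/-!
With `v = u ^ (1 / α)`, the terms of `E_α(u)` are `v ^ s / Γ(s + 1)` at the points `s = αk`.
Elementary bounds on `Γ` squeeze the sum between constant multiples of two exponentials of `v`: the
lower one already comes from the single term with `s ≈ v / 2`, the upper one from comparison with a
geometric series. Hence `log E_α(λ t ^ β)` has exact order `t ^ (β / α)`. The strict inequality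
between the exponents then makes `E_{α₀}(λ t ^ α̃₀)` negligible against `E_α(λ t ^ α̃)`, so `R_1` is
asymptotic to its first term, whose logarithm only has order `t ^ (α̃₀ / α₀)`.
-/

section

open Real Asymptotics MeasureTheory

theorem rpow_mul_exp_neg_le {s x : ℝ} (hs : 0 ≤ s) (hx : 0 ≤ x) :
    x ^ s * exp (-x) ≤ s ^ s * exp (-s) := by
  rcases hs.eq_or_lt with rfl | hs
  · simpa using hx
  have htangent : x / s ≤ exp (x / s - 1) := by simpa using add_one_le_exp (x / s - 1)
  have hpow : x ^ s / s ^ s ≤ exp (x - s) := calc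
    x ^ s / s ^ s = (x / s) ^ s := (div_rpow hx hs.le s).symm
    _ ≤ exp (x / s - 1) ^ s := by gcongr
    _ = exp (x - s) := by
      rw [← exp_mul, sub_mul, one_mul, div_mul_cancel₀ _ hs.ne']
  rw [div_le_iff₀ (by positivity)] at hpow
  calc x ^ s * exp (-x) ≤ exp (x - s) * s ^ s * exp (-x) := by gcongr
    _ = s ^ s * (exp (x - s) * exp (-x)) := by ring
    _ = s ^ s * exp (-s) := by rw [← exp_add]; ring_nf

theorem rpow_mul_exp_neg_le_Gamma_add_one {s w : ℝ} (hs : 0 ≤ s) (hw : 0 ≤ w) :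
    w ^ s * exp (-w) ≤ Gamma (s + 1) := by
  have hint : IntegrableOn (fun x ↦ exp (-x) * x ^ (s + 1 - 1)) (Set.Ioi 0) :=
    GammaIntegral_convergent (by positivity)
  have hsub : Set.Ioi w ⊆ Set.Ioi 0 := Set.Ioi_subset_Ioi hw
  calc w ^ s * exp (-w) = ∫ x in Set.Ioi w, exp (-x) * w ^ s := by
        rw [integral_mul_const, integral_exp_neg_Ioi, mul_comm]
    _ ≤ ∫ x in Set.Ioi w, exp (-x) * x ^ (s + 1 - 1) := by
        refine setIntegral_mono_on ((integrableOn_exp_neg_Ioi w).mul_const _)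
          (hint.mono_set hsub) measurableSet_Ioi fun x (hx : w < x) ↦ ?_
        rw [add_sub_cancel_right]
        gcongr
    _ ≤ ∫ x in Set.Ioi 0, exp (-x) * x ^ (s + 1 - 1) := by
        refine setIntegral_mono_set hint ?_ hsub.eventuallyLE
        filter_upwards [ae_restrict_mem measurableSet_Ioi] with x (hx : 0 < x)
        exact mul_nonneg (exp_pos _).le (rpow_nonneg hx.le _)
    _ = Gamma (s + 1) := (Gamma_eq_integral (by positivity)).symm

theorem Gamma_add_one_le {s : ℝ} (hs : 0 ≤ s) :
    Gamma (s + 1) ≤ 2 * ((2 * s) ^ s * exp (-s)) := by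
  -- Half of the decay of `exp (-x)` absorbs `x ^ s`, the other half stays integrable.
  have hbound {x : ℝ} (hx : 0 ≤ x) :
      exp (-x) * x ^ (s + 1 - 1) ≤ (2 * s) ^ s * exp (-s) * exp (-(1 / 2) * x) := calc
    exp (-x) * x ^ (s + 1 - 1)
        = 2 ^ s * ((x / 2) ^ s * exp (-(x / 2))) * exp (-(1 / 2) * x) := by
      have hexp : exp (-x) = exp (-(x / 2)) * exp (-(1 / 2) * x) := by rw [← exp_add]; ring_nf
      rw [hexp, add_sub_cancel_right, div_rpow hx zero_le_two]
      field_simp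
    _ ≤ 2 ^ s * (s ^ s * exp (-s)) * exp (-(1 / 2) * x) := by
      gcongr 2 ^ s * ?_ * _
      exact rpow_mul_exp_neg_le hs (by positivity)
    _ = (2 * s) ^ s * exp (-s) * exp (-(1 / 2) * x) := by rw [mul_rpow zero_le_two hs]; ring
  calc Gamma (s + 1) = ∫ x in Set.Ioi 0, exp (-x) * x ^ (s + 1 - 1) :=
        Gamma_eq_integral (by positivity)
    _ ≤ ∫ x in Set.Ioi 0, (2 * s) ^ s * exp (-s) * exp (-(1 / 2) * x) :=
        setIntegral_mono_on (GammaIntegral_convergent (by positivity))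
          ((integrableOn_exp_mul_Ioi (by norm_num) 0).const_mul _) measurableSet_Ioi
          fun x (hx : 0 < x) ↦ hbound hx.le
    _ = 2 * ((2 * s) ^ s * exp (-s)) := by
        rw [integral_const_mul, integral_exp_mul_Ioi (by norm_num)]
        simp only [mul_zero, exp_zero]
        ring

theorem exp_div_two_le_rpow_div_Gamma_add_one {s v : ℝ} (hs : 0 ≤ s) (hv : 2 * s ≤ v) :
    exp s / 2 ≤ v ^ s / Gamma (s + 1) := by
  rw [le_div_iff₀ (Gamma_pos_of_pos (by positivity))]
  calc exp s / 2 * Gamma (s + 1) ≤ exp s / 2 * (2 * ((2 * s) ^ s * exp (-s))) := by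
        gcongr
        exact Gamma_add_one_le hs
    _ = (2 * s) ^ s := by rw [exp_neg]; field_simp
    _ ≤ v ^ s := by gcongr

variable {α u : ℝ}

theorem abs_mittagLeffler_term_le (hα : 0 < α) (u : ℝ) (k : ℕ) :
    |u ^ k / Gamma (α * k + 1)| ≤ (1 / 2) ^ k * exp ((2 * |u|) ^ (1 / α)) := by
  have hΓ : 0 < Gamma (α * k + 1) := Gamma_pos_of_pos (by positivity)
  have hpow : ((2 * |u|) ^ (1 / α)) ^ (α * k) = 2 ^ k * |u| ^ k := by
    rw [← rpow_mul (by positivity), ← mul_assoc, one_div_mul_cancel hα.ne', one_mul, rpow_natCast,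
      mul_pow]
  have hlower := rpow_mul_exp_neg_le_Gamma_add_one (s := α * k) (w := (2 * |u|) ^ (1 / α))
    (by positivity) (by positivity)
  rw [hpow] at hlower
  rw [abs_div, abs_pow, abs_of_pos hΓ, div_le_iff₀ hΓ]
  calc |u| ^ k = (1 / 2) ^ k * exp ((2 * |u|) ^ (1 / α)) *
          (2 ^ k * |u| ^ k * exp (-(2 * |u|) ^ (1 / α))) := by
        rw [exp_neg, one_div, inv_pow]
        field_simp
    _ ≤ _ := by gcongr

theorem summable_mittagLeffler_term (hα : 0 < α) (u : ℝ) :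
    Summable fun k : ℕ ↦ u ^ k / Gamma (α * k + 1) :=
  .of_norm_bounded (summable_geometric_two.mul_right _) (abs_mittagLeffler_term_le hα u)

theorem abs_mittagLeffler_le (hα : 0 < α) (u : ℝ) :
    |mittagLeffler α u| ≤ 2 * exp ((2 * |u|) ^ (1 / α)) := by
  rw [mittagLeffler, ← norm_eq_abs]
  exact tsum_of_norm_bounded (hasSum_geometric_two.mul_right _) (abs_mittagLeffler_term_le hα u)

theorem exp_div_two_le_mittagLeffler (hα : 0 < α) (hu : 0 ≤ u) :
    exp (u ^ (1 / α) / 2 - α) / 2 ≤ mittagLeffler α u := by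
  set v := u ^ (1 / α) with hv
  set k := ⌊v / (2 * α)⌋₊
  have hk_le : 2 * (α * k) ≤ v := by
    have := Nat.floor_le (show 0 ≤ v / (2 * α) by positivity)
    rw [le_div_iff₀ (by positivity)] at this
    linarith
  have hk_ge : v / 2 - α ≤ α * k := by
    have := Nat.lt_floor_add_one (v / (2 * α))
    rw [div_lt_iff₀ (by positivity)] at this
    linarith
  have hpow : v ^ (α * k) = u ^ k := by
    rw [hv, ← rpow_mul hu, ← mul_assoc, one_div_mul_cancel hα.ne', one_mul, rpow_natCast]
  calc exp (v / 2 - α) / 2 ≤ exp (α * k) / 2 := by gcongr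
    _ ≤ v ^ (α * k) / Gamma (α * k + 1) :=
        exp_div_two_le_rpow_div_Gamma_add_one (by positivity) hk_le
    _ = u ^ k / Gamma (α * k + 1) := by rw [hpow]
    _ ≤ mittagLeffler α u :=
        (summable_mittagLeffler_term hα u).le_tsum k fun j _ ↦
          div_nonneg (pow_nonneg hu j) (Gamma_pos_of_pos (by positivity)).le

theorem tendsto_mittagLeffler_atTop (hα : 0 < α) : Tendsto (mittagLeffler α) atTop atTop := by
  have hrpow : Tendsto (fun u : ℝ ↦ u ^ (1 / α)) atTop atTop :=
    tendsto_rpow_atTop (one_div_pos.2 hα)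
  have hexp : Tendsto (fun u : ℝ ↦ exp (u ^ (1 / α) / 2 - α) / 2) atTop atTop :=
    (tendsto_exp_atTop.comp (tendsto_atTop_add_const_right _ (-α)
      (hrpow.atTop_div_const two_pos))).atTop_div_const two_pos
  exact tendsto_atTop_mono' _
    ((eventually_ge_atTop 0).mono fun u hu ↦ exp_div_two_le_mittagLeffler hα hu) hexp

theorem log_mittagLeffler_le (hα : 0 < α) (hu : 0 ≤ u) :
    log (mittagLeffler α u) ≤ log 2 + 2 ^ (1 / α) * u ^ (1 / α) := by
  have hpos : 0 < mittagLeffler α u :=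
    (by positivity : 0 < exp (u ^ (1 / α) / 2 - α) / 2).trans_le
      (exp_div_two_le_mittagLeffler hα hu)
  calc log (mittagLeffler α u) ≤ log (2 * exp ((2 * u) ^ (1 / α))) := by
        gcongr
        simpa only [abs_of_nonneg hu] using
          (le_abs_self _).trans (abs_mittagLeffler_le hα u)
    _ = log 2 + 2 ^ (1 / α) * u ^ (1 / α) := by
        rw [log_mul two_ne_zero (exp_ne_zero _), log_exp, mul_rpow zero_le_two hu]

theorem le_log_mittagLeffler (hα : 0 < α) (hu : 0 ≤ u) :
    u ^ (1 / α) / 2 - (α + log 2) ≤ log (mittagLeffler α u) := by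
  calc u ^ (1 / α) / 2 - (α + log 2) = log (exp (u ^ (1 / α) / 2 - α) / 2) := by
        rw [log_div (exp_ne_zero _) two_ne_zero, log_exp]
        ring
    _ ≤ log (mittagLeffler α u) := by
        gcongr
        exact exp_div_two_le_mittagLeffler hα hu

theorem isTheta_log_mittagLeffler (hα : 0 < α) :
    (fun u ↦ log (mittagLeffler α u)) =Θ[atTop] fun u ↦ u ^ (1 / α) := by
  have hrpow : Tendsto (fun u : ℝ ↦ u ^ (1 / α)) atTop atTop :=
    tendsto_rpow_atTop (one_div_pos.2 hα)
  have hlog_nonneg : ∀ᶠ u in atTop, 0 ≤ log (mittagLeffler α u) :=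
    (tendsto_log_atTop.comp (tendsto_mittagLeffler_atTop hα)).eventually_ge_atTop 0
  constructor
  · refine .of_bound (1 + 2 ^ (1 / α)) ?_
    filter_upwards [hlog_nonneg, hrpow.eventually_ge_atTop (log 2), eventually_ge_atTop 0]
      with u hlog hlarge hu
    rw [norm_of_nonneg hlog, norm_of_nonneg (by positivity)]
    linarith [log_mittagLeffler_le hα hu]
  · refine .of_bound 4 ?_
    filter_upwards [hlog_nonneg, hrpow.eventually_ge_atTop (4 * (α + log 2)), eventually_ge_atTop 0]
      with u hlog hlarge hu
    rw [norm_of_nonneg hlog, norm_of_nonneg (by positivity)]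
    linarith [le_log_mittagLeffler hα hu]

theorem isTheta_log_mittagLeffler_mul_rpow {lam β : ℝ} (hα : 0 < α) (hlam : 0 < lam)
    (hβ : 0 < β) :
    (fun t ↦ log (mittagLeffler α (lam * t ^ β))) =Θ[atTop] fun t ↦ t ^ (β / α) := by
  have harg : Tendsto (fun t : ℝ ↦ lam * t ^ β) atTop atTop :=
    (tendsto_rpow_atTop hβ).const_mul_atTop hlam
  have hscale : (fun t : ℝ ↦ (lam * t ^ β) ^ (1 / α)) =ᶠ[atTop]
      fun t ↦ lam ^ (1 / α) * t ^ (β / α) := by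
    filter_upwards [eventually_ge_atTop 0] with t ht
    rw [mul_rpow hlam.le (by positivity), ← rpow_mul ht, mul_one_div]
  have hcomp : (fun t ↦ log (mittagLeffler α (lam * t ^ β))) =Θ[atTop]
      fun t ↦ (lam * t ^ β) ^ (1 / α) :=
    ⟨(isTheta_log_mittagLeffler hα).1.comp_tendsto harg,
      (isTheta_log_mittagLeffler hα).2.comp_tendsto harg⟩
  exact (isTheta_const_mul_right (by positivity)).1 (hcomp.trans_eventuallyEq hscale)

theorem isLittleO_rpow_rpow_atTop {p q : ℝ} (hpq : p < q) :
    (fun t : ℝ ↦ t ^ p) =o[atTop] fun t ↦ t ^ q := by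
  refine isLittleO_of_tendsto' ?_ ((tendsto_rpow_neg_atTop (sub_pos.2 hpq)).congr' ?_)
  · filter_upwards [eventually_gt_atTop 0] with t ht hzero
    exact absurd hzero (by positivity)
  · filter_upwards [eventually_gt_atTop 0] with t ht
    rw [neg_sub, rpow_sub ht]

variable {ι : Type*} {l : Filter ι} {f g : ι → ℝ}

theorem isLittleO_of_isLittleO_log (hf : ∀ᶠ x in l, 0 < f x) (hg : Tendsto g l atTop)
    (hlog : (fun x ↦ log (f x)) =o[l] fun x ↦ log (g x)) : f =o[l] g := by
  have hdiff : Tendsto (fun x ↦ log (g x) - log (f x)) l atTop :=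
    (IsEquivalent.refl.sub_isLittleO hlog).symm.tendsto_atTop (tendsto_log_atTop.comp hg)
  refine (isLittleO_exp_comp_exp_comp.2 hdiff).congr' ?_ ?_
  · filter_upwards [hf] with x hx using exp_log hx
  · filter_upwards [hg.eventually_gt_atTop 0] with x hx using exp_log hx

theorem isEquivalent_div_sub_div {𝕜 : Type*} [NormedField 𝕜] {f g : ι → 𝕜} {c : 𝕜} (hc : c ≠ 0)
    (d : 𝕜) (hf : ∀ᶠ x in l, f x ≠ 0) (hfg : f =o[l] g) :
    (fun x ↦ c / f x - d / g x) ~[l] fun x ↦ c / f x := by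
  have hinv : (fun x ↦ (g x)⁻¹) =o[l] fun x ↦ (f x)⁻¹ :=
    hfg.inv_rev (hf.mono fun x hx hzero ↦ absurd hzero hx)
  simp only [div_eq_mul_inv]
  exact IsEquivalent.refl.sub_isLittleO ((hinv.const_mul_left d).const_mul_right hc)

theorem isEquivalent_log_of_isEquivalent_const_div {c : ℝ} (hc : 0 < c)
    (hf : Tendsto f l atTop) (hgf : g ~[l] fun x ↦ c / f x) :
    (fun x ↦ log (g x)) ~[l] fun x ↦ -log (f x) := by
  have hlogf : Tendsto (fun x ↦ log (f x)) l atTop := tendsto_log_atTop.comp hf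
  -- `IsEquivalent.log` needs functions tending to infinity, hence the passage to inverses.
  have hinv : (fun x ↦ (g x)⁻¹) ~[l] fun x ↦ f x / c :=
    hgf.inv.congr_right (.of_eq (funext fun x ↦ inv_div c (f x)))
  have hconst : (fun x ↦ log (f x / c)) ~[l] fun x ↦ log (f x) :=
    (IsEquivalent.refl.sub_isLittleO
      (isLittleO_const_left.2 (.inr (tendsto_norm_atTop_atTop.comp hlogf)))).congr_left <| by
        filter_upwards [hf.eventually_gt_atTop 0] with x hx using (log_div hx.ne' hc.ne').symm
  simpa only [log_inv, neg_neg] using ((hinv.log (hf.atTop_div_const hc)).trans hconst).neg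

theorem R1_analysis_general {lam lam0 d00 α α0 αt αt0 : ℝ} (hlam : 0 < lam) (hlam0 : 0 < lam0)
    (d0 : ℝ) (hd00 : 0 < d00) (hα : 0 < α) (hα0 : 0 < α0) (hαt0 : 0 < αt0)
    (hcase : αt0 / α0 < αt / α) :
    (∀ᶠ t : ℝ in atTop,
      0 < d00 / mittagLeffler α0 (lam0 * t ^ αt0) - d0 / mittagLeffler α (lam * t ^ αt)) ∧
    Tendsto (fun t : ℝ ↦
        d00 / mittagLeffler α0 (lam0 * t ^ αt0) - d0 / mittagLeffler α (lam * t ^ αt))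
      atTop (𝓝 0) ∧
    Tendsto (fun t : ℝ ↦ t ^ (-(αt / α)) *
        log (d00 / mittagLeffler α0 (lam0 * t ^ αt0) - d0 / mittagLeffler α (lam * t ^ αt)))
      atTop (𝓝 0) := by
  have hαt : 0 < αt := (div_pos_iff_of_pos_right hα).1 ((div_pos hαt0 hα0).trans hcase)
  have hf : Tendsto (fun t : ℝ ↦ mittagLeffler α0 (lam0 * t ^ αt0)) atTop atTop :=
    (tendsto_mittagLeffler_atTop hα0).comp ((tendsto_rpow_atTop hαt0).const_mul_atTop hlam0)
  have hg : Tendsto (fun t : ℝ ↦ mittagLeffler α (lam * t ^ αt)) atTop atTop :=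
    (tendsto_mittagLeffler_atTop hα).comp ((tendsto_rpow_atTop hαt).const_mul_atTop hlam)
  have hlogf : (fun t : ℝ ↦ log (mittagLeffler α0 (lam0 * t ^ αt0))) =o[atTop]
      fun t ↦ t ^ (αt / α) :=
    (isTheta_log_mittagLeffler_mul_rpow hα0 hlam0 hαt0).trans_isLittleO
      (isLittleO_rpow_rpow_atTop hcase)
  have hfg := isLittleO_of_isLittleO_log (hf.eventually_gt_atTop 0) hg
    (hlogf.trans_isTheta (isTheta_log_mittagLeffler_mul_rpow hα hlam hαt).symm)
  have hR := isEquivalent_div_sub_div hd00.ne' d0 (hf.eventually_ne_atTop 0) hfg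
  refine ⟨hR.eventually_pos ((hf.eventually_gt_atTop 0).mono fun t ht ↦ div_pos hd00 ht),
    hR.symm.tendsto_nhds (hf.const_div_atTop d00), ?_⟩
  have hlogR := (isEquivalent_log_of_isEquivalent_const_div hd00 hf hR).trans_isLittleO
    hlogf.neg_left
  refine hlogR.tendsto_div_nhds_zero.congr' ?_
  filter_upwards [eventually_ge_atTop 0] with t ht
  rw [rpow_neg ht, div_eq_inv_mul]

end

/-- Section 4.2.2 of the paper, analysis of `R_1(t)`: for `λ > 0`, `d_0, d_{0,0} > 0` and
`α, α_0, α̃, α̃_0 ∈ (0,1]` with `α̃/α > α̃_0/α_0`, setting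
`R_1(t) = d_{0,0}/E^1_{α_0,1}(λt^{α̃_0}) - d_0/E^1_{α,1}(λt^{α̃})`, one has `R_1(t) > 0`
eventually, `R_1(t) → 0`, and `t^{-α̃/α} log R_1(t) → 0`. -/
theorem R1_analysis
    (lam d0 d00 α α0 αt αt0 : ℝ)
    (hlam : 0 < lam) (hd0 : 0 < d0) (hd00 : 0 < d00)
    (hα : α ∈ Set.Ioc (0 : ℝ) 1) (hα0 : α0 ∈ Set.Ioc (0 : ℝ) 1)
    (hαt : αt ∈ Set.Ioc (0 : ℝ) 1) (hαt0 : αt0 ∈ Set.Ioc (0 : ℝ) 1)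
    (hcase : αt0 / α0 < αt / α) :
    (∀ᶠ t : ℝ in atTop,
      0 < d00 / mittagLeffler α0 (lam * t ^ αt0) - d0 / mittagLeffler α (lam * t ^ αt)) ∧
    Tendsto (fun t : ℝ =>
        d00 / mittagLeffler α0 (lam * t ^ αt0) - d0 / mittagLeffler α (lam * t ^ αt))
      atTop (𝓝 0) ∧
    Tendsto (fun t : ℝ => t ^ (-(αt / α)) *
        Real.log (d00 / mittagLeffler α0 (lam * t ^ αt0) - d0 / mittagLeffler α (lam * t ^ αt)))
      atTop (𝓝 0) :=
  R1_analysis_general hlam hlam d0 hd00 hα.1 hα0.1 hαt0.1 hcase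
end
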